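/- Talagrand's convex hull concentration: for X with independent coordinates in 𝒳ⁿ and measurable A ⊆ 𝒳ⁿ, P{X∈A}·E[exp(D(X,A)²/4)] ≤ 1, and consequently P{X∈A}·P{D(X,A) ≥ t} ≤ exp(-t²/4) for all t ≥ 0. -/

import Mathlib

open Set MeasureTheory
open scoped Classical

/-- Talagrand's convex distance
`D(x,A) := sup_{w ∈ 𝒲} inf_{y ∈ A} Σ_i w_i·1{x_i ≠ y_i}`, where the supremum runs over
weights `w ∈ ℝ₊ⁿ` with `Σ_i w_i² ≤ 1`. -/
noncomputable def talD {X : Type*} {n : ℕ} (x : Fin n → X) (A : Set (Fin n → X)) : ℝ :=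
  sSup {s | ∃ w : Fin n → ℝ, (∀ i, 0 ≤ w i) ∧ (∑ i, (w i) ^ 2) ≤ 1 ∧
    s = sInf {t | ∃ y ∈ A, t = ∑ i, if x i = y i then 0 else w i}}

lemma talD_bdd {X : Type*} {n : ℕ} (x : Fin n → X) (A : Set (Fin n → X)) (w : Fin n → ℝ)
    (hw : ∀ i, 0 ≤ w i) :
    BddBelow {t | ∃ y ∈ A, t = ∑ i, if x i = y i then 0 else w i} := by
  refine ⟨0, ?_⟩
  rintro t ⟨y, -, rfl⟩
  refine Finset.sum_nonneg fun i _ => ?_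
  split_ifs
  · exact le_rfl
  · exact hw i

lemma talD_bddAbove {X : Type*} {n : ℕ} (x : Fin n → X) (A : Set (Fin n → X)) :
    BddAbove {s | ∃ w : Fin n → ℝ, (∀ i, 0 ≤ w i) ∧ (∑ i, (w i) ^ 2) ≤ 1 ∧
    s = sInf {t | ∃ y ∈ A, t = ∑ i, if x i = y i then 0 else w i}} := by
  refine ⟨n, ?_⟩
  rintro s ⟨w, hw, hw1, rfl⟩
  rcases A.eq_empty_or_nonempty with rfl | ⟨y, hy⟩
  · simp
  · refine (csInf_le (talD_bdd x A w hw) ⟨y, hy, rfl⟩).trans ?_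
    have : ∀ i ∈ Finset.univ, (if x i = y i then 0 else w i) ≤ (1:ℝ) := by
      intro i _
      have h1 : w i ^ 2 ≤ ∑ i, (w i) ^ 2 :=
        Finset.single_le_sum (f := fun i => w i ^ 2) (fun i _ => sq_nonneg _) (Finset.mem_univ i)
      split_ifs
      · norm_num
      · nlinarith [hw i]
    refine (Finset.sum_le_sum this).trans ?_
    simp

lemma talD_nonneg {X : Type*} {n : ℕ} (x : Fin n → X) (A : Set (Fin n → X)) :
    0 ≤ talD x A := by
  refine le_csSup (talD_bddAbove x A) ⟨0, by simp, by simp, ?_⟩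
  rcases A.eq_empty_or_nonempty with rfl | hA
  · simp
  · have : {t : ℝ | ∃ y ∈ A, t = ∑ i, if x i = y i then 0 else (0 : Fin n → ℝ) i} = {0} := by
      ext t
      simp only [Pi.zero_apply, ite_self, Finset.sum_const_zero, mem_ofPred_eq, mem_singleton_iff]
      exact ⟨fun ⟨_, _, h⟩ => h, fun h => ⟨hA.some, hA.some_mem, h⟩⟩
    rw [this, csInf_singleton]

lemma talD_exists {X : Type*} {n : ℕ} (x : Fin n → X) (A : Set (Fin n → X)) (hA : A.Nonempty)
    (w : Fin n → ℝ) (hw : ∀ i, 0 ≤ w i) (c : ℝ) (hc : 0 ≤ c) (hwc : ∑ i, (w i) ^ 2 ≤ c ^ 2)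
    (ε : ℝ) (hε : 0 < ε) :
    ∃ y ∈ A, (∑ i, if x i = y i then 0 else w i) < c * talD x A + ε := by
  rcases hc.eq_or_lt with rfl | hc
  · obtain ⟨y, hy⟩ := hA
    refine ⟨y, hy, ?_⟩
    have h0 : ∀ i, w i = 0 := by
      intro i
      have h1 : w i ^ 2 ≤ ∑ i, (w i) ^ 2 :=
        Finset.single_le_sum (f := fun i => w i ^ 2) (fun i _ => sq_nonneg _) (Finset.mem_univ i)
      nlinarith [hw i]
    simp [h0, hε]
  · have h1 : sInf {t | ∃ y ∈ A, t = ∑ i, if x i = y i then 0 else w i / c} ≤ talD x A := by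
      refine le_csSup (talD_bddAbove x A) ⟨fun i => w i / c, fun i => div_nonneg (hw i) hc.le, ?_, rfl⟩
      simp only [div_pow]
      rw [← Finset.sum_div]
      exact div_le_one_of_le₀ hwc (by positivity)
    have h2 : sInf {t | ∃ y ∈ A, t = ∑ i, if x i = y i then 0 else w i / c} < talD x A + ε / c :=
      lt_of_le_of_lt h1 (by linarith [div_pos hε hc])
    obtain ⟨t, ⟨y, hy, rfl⟩, ht⟩ := exists_lt_of_csInf_lt
      (by obtain ⟨y, hy⟩ := hA; exact ⟨_, y, hy, rfl⟩) h2
    refine ⟨y, hy, ?_⟩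
    have h3 : (∑ i, if x i = y i then 0 else w i)
        = c * ∑ i, if x i = y i then 0 else w i / c := by
      rw [Finset.mul_sum]
      refine Finset.sum_congr rfl fun i _ => ?_
      split_ifs
      · simp
      · field_simp
    rw [h3]
    calc _ < c * (talD x A + ε / c) := mul_lt_mul_of_pos_left ht hc
      _ = _ := by field_simp

lemma talD_le_of {X : Type*} {n : ℕ} (x : Fin n → X) (A : Set (Fin n → X)) (R : ℝ)
    (h : ∀ w : Fin n → ℝ, (∀ i, 0 ≤ w i) → (∑ i, (w i) ^ 2) ≤ 1 → ∀ ε > 0,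
      ∃ y ∈ A, (∑ i, if x i = y i then 0 else w i) ≤ R + ε) : talD x A ≤ R := by
  refine csSup_le ⟨_, 0, by simp, by simp, rfl⟩ ?_
  rintro s ⟨w, hw, hw1, rfl⟩
  refine le_of_forall_pos_le_add fun ε hε => ?_
  obtain ⟨y, hy, hy'⟩ := h w hw hw1 ε hε
  exact (csInf_le (talD_bdd x A w hw) ⟨y, hy, rfl⟩).trans hy'

lemma tal_sum_cons {X : Type*} {n : ℕ} (x : Fin (n + 1) → X) (a : X) (y : Fin n → X)
    (w : Fin (n + 1) → ℝ) :
    (∑ i, if x i = (Fin.cons a y : Fin (n + 1) → X) i then 0 else w i) =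
      (if x 0 = a then 0 else w 0) + ∑ i, if Fin.tail x i = y i then 0 else w i.succ :=
  Fin.sum_univ_succ _

lemma talD_step {X : Type*} {n : ℕ} (x : Fin (n + 1) → X) (A : Set (Fin (n + 1) → X))
    (A1 A2 : Set (Fin n → X)) (h1 : ∀ y ∈ A1, Fin.cons (x 0) y ∈ A)
    (h2 : ∀ y ∈ A2, ∃ a : X, Fin.cons a y ∈ A) (hA2 : A2.Nonempty) (l : ℝ) (hl0 : 0 ≤ l)
    (hl1 : l ≤ 1) (hA1 : l = 0 ∨ A1.Nonempty) :
    talD x A ^ 2 ≤ (1 - l) ^ 2 + l * talD (Fin.tail x) A1 ^ 2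
      + (1 - l) * talD (Fin.tail x) A2 ^ 2 := by
  set D1 := talD (Fin.tail x) A1
  set D2 := talD (Fin.tail x) A2
  set M := l * D1 + (1 - l) * D2 with hM
  have hD1 : 0 ≤ D1 := talD_nonneg _ _
  have hD2 : 0 ≤ D2 := talD_nonneg _ _
  have hM0 : 0 ≤ M := add_nonneg (mul_nonneg hl0 hD1) (mul_nonneg (by linarith) hD2)
  set R := Real.sqrt ((1 - l) ^ 2 + M ^ 2) with hR
  have hR2 : R ^ 2 = (1 - l) ^ 2 + M ^ 2 := Real.sq_sqrt (by positivity)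
  have hR0 : 0 ≤ R := Real.sqrt_nonneg _
  have key : talD x A ≤ R := by
    refine talD_le_of x A R fun w hw hw1 ε hε => ?_
    by_contra! hcon
    rw [Fin.sum_univ_succ] at hw1
    set c := Real.sqrt (∑ i : Fin n, w i.succ ^ 2) with hc
    have hc2 : c ^ 2 = ∑ i : Fin n, w i.succ ^ 2 :=
      Real.sq_sqrt (Finset.sum_nonneg fun i _ => sq_nonneg _)
    have hc0 : 0 ≤ c := Real.sqrt_nonneg _
    have hw0 := hw 0
    have CS : (1 - l) * w 0 + c * M ≤ R := by
      refine abs_le_of_sq_le_sq' ?_ hR0 |>.2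
      rw [hR2]
      have : w 0 ^ 2 + c ^ 2 ≤ 1 := by rw [hc2]; exact hw1
      nlinarith [sq_nonneg ((1 - l) * c - w 0 * M), sq_nonneg (1 - l), sq_nonneg M,
        mul_nonneg (add_nonneg (sq_nonneg (1 - l)) (sq_nonneg M)) (sub_nonneg.2 this)]
    have e2 : R + ε ≤ w 0 + c * D2 + ε / 2 := by
      obtain ⟨y, hy, hys⟩ := talD_exists (Fin.tail x) A2 hA2 (fun i => w i.succ)
        (fun i => hw _) c hc0 hc2.ge (ε / 2) (by linarith)
      obtain ⟨a, ha⟩ := h2 y hy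
      have := hcon _ ha
      rw [tal_sum_cons] at this
      have h3 : (if x 0 = a then 0 else w 0) ≤ w 0 := by
        split_ifs
        · exact hw0
        · exact le_rfl
      linarith
    have e1 : l * (R + ε) ≤ l * (c * D1 + ε / 2) := by
      rcases hA1 with h | hA1
      · simp [h]
      · obtain ⟨y, hy, hys⟩ := talD_exists (Fin.tail x) A1 hA1 (fun i => w i.succ)
          (fun i => hw _) c hc0 hc2.ge (ε / 2) (by linarith)
        have := hcon _ (h1 y hy)
        rw [tal_sum_cons, if_pos rfl] at this
        refine mul_le_mul_of_nonneg_left ?_ hl0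
        linarith
    have e3 := mul_le_mul_of_nonneg_left e2 (sub_nonneg.2 hl1)
    rw [hM] at CS
    nlinarith
  have k2 : talD x A ^ 2 ≤ R ^ 2 := pow_le_pow_left₀ (talD_nonneg _ _) key 2
  rw [hR2] at k2
  have : M ^ 2 ≤ l * D1 ^ 2 + (1 - l) * D2 ^ 2 := by
    rw [hM]
    nlinarith [mul_nonneg (mul_nonneg hl0 (sub_nonneg.2 hl1)) (sq_nonneg (D1 - D2))]
  linarith

lemma tal_exp_ineq (u : ℝ) (h0 : 0 ≤ u) (h1 : u ≤ 1 / 2) :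
    Real.exp (u - u ^ 2) + Real.exp (-u) ≤ 2 := by
  have a1 : Real.exp (-u) ≤ 1 - u + u ^ 2 / 2 := by
    rw [Real.exp_neg]
    have := Real.quadratic_le_exp_of_nonneg h0
    refine (inv_anti₀ (by positivity) this).trans ?_
    rw [inv_le_iff_one_le_mul₀ (by positivity)]
    nlinarith [sq_nonneg (u ^ 2)]
  have s0 : 0 ≤ u - u ^ 2 := by nlinarith
  have s1 : u - u ^ 2 ≤ 1 := by nlinarith
  have a2 := Real.exp_bound' s0 s1 (n := 3) (by norm_num)
  norm_num [Finset.sum_range_succ, Nat.factorial] at a2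
  have f : (u - u ^ 2) ^ 3 ≤ u ^ 3 := pow_le_pow_left₀ s0 (by nlinarith) 3
  have : 0 ≤ u ^ 3 := by positivity
  nlinarith [mul_nonneg this h0]

/-- The choice of the interpolation parameter. -/
noncomputable def talLam (r : ℝ) : ℝ :=
  if r ≤ Real.exp (-1 / 2) then 0 else min 1 (1 + 2 * Real.log r)

lemma talLam_meas : Measurable talLam := by
  unfold talLam
  exact Measurable.ite measurableSet_Iic measurable_const (by fun_prop)

lemma talLam_nonneg (r : ℝ) : 0 ≤ talLam r := by
  unfold talLam
  split_ifs with h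
  · exact le_rfl
  · push Not at h
    have := (Real.lt_log_iff_exp_lt ((Real.exp_pos _).trans h)).2 h
    exact le_min (by norm_num) (by linarith)

lemma talLam_le_one (r : ℝ) : talLam r ≤ 1 := by
  unfold talLam
  split_ifs with h
  · norm_num
  · exact min_le_left _ _

lemma talLam_zero : talLam 0 = 0 := by
  unfold talLam
  rw [if_pos (Real.exp_pos _).le]

lemma talLam_ineq (r : ℝ) (h1 : r ≤ 1) :
    Real.exp ((1 - talLam r) ^ 2 / 4) ≤ (2 - r) * r ^ talLam r := by
  unfold talLam
  split_ifs with h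
  · have := tal_exp_ineq (1 / 2) (by norm_num) le_rfl
    norm_num at this h ⊢
    linarith
  · push Not at h
    have hr : 0 < r := (Real.exp_pos _).trans h
    have hl := (Real.lt_log_iff_exp_lt hr).2 h
    have hl0 : Real.log r ≤ 0 := Real.log_nonpos hr.le h1
    rw [min_eq_right (by linarith), Real.rpow_def_of_pos hr]
    have := tal_exp_ineq (-Real.log r) (by linarith) (by linarith)
    rw [neg_neg, Real.exp_log hr] at this
    have h2 := mul_le_mul_of_nonneg_right (le_sub_iff_add_le.2 this)
      (Real.exp_pos (Real.log r * (1 + 2 * Real.log r))).le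
    refine le_trans (le_of_eq ?_) h2
    rw [← Real.exp_add]
    congr 1
    ring

lemma tal_num (I1 I2 α b : ENNReal) (hα : α ≤ b) (hb1 : b ≤ 1) (hb0 : b ≠ 0)
    (h1 : α * I1 ≤ 1) (h2 : b * I2 ≤ 1) (l : ℝ) (hl : l = talLam (α.toReal / b.toReal)) :
    I1 ^ l * I2 ^ (1 - l) * ENNReal.ofReal (Real.exp ((1 - l) ^ 2 / 4)) ≤
      ENNReal.ofReal ((2 - α.toReal / b.toReal) / b.toReal) := by
  have hbt : b ≠ ⊤ := ne_top_of_le_ne_top ENNReal.one_ne_top hb1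
  have hαt : α ≠ ⊤ := ne_top_of_le_ne_top hbt hα
  have hb' : 0 < b.toReal := ENNReal.toReal_pos hb0 hbt
  have hle : α.toReal ≤ b.toReal := ENNReal.toReal_mono hbt hα
  have hr1 : α.toReal / b.toReal ≤ 1 := div_le_one_of_le₀ hle hb'.le
  have key := talLam_ineq _ hr1
  have l0 := talLam_nonneg (α.toReal / b.toReal)
  have l1 := talLam_le_one (α.toReal / b.toReal)
  rw [← hl] at key l0 l1
  have hI2 : I2 ≤ ENNReal.ofReal (b.toReal⁻¹) := by
    rw [ENNReal.ofReal_inv_of_pos hb', ENNReal.ofReal_toReal hbt]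
    rw [mul_comm] at h2
    exact ENNReal.le_inv_iff_mul_le.2 h2
  by_cases hα0 : α = 0
  · have hl0 : l = 0 := by rw [hl, hα0]; simp [talLam_zero]
    subst hl0
    simp only [ENNReal.rpow_zero, one_mul, sub_zero, ENNReal.rpow_one]
    rw [hα0] at key ⊢
    simp only [ENNReal.toReal_zero, zero_div, sub_zero, Real.rpow_zero, mul_one] at key ⊢
    refine (mul_le_mul' hI2 le_rfl).trans ?_
    rw [← ENNReal.ofReal_mul (by positivity)]
    refine ENNReal.ofReal_le_ofReal ?_
    rw [div_eq_inv_mul (2 : ℝ)]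
    exact mul_le_mul_of_nonneg_left key (inv_nonneg.2 hb'.le)
  · have hα' : 0 < α.toReal := ENNReal.toReal_pos hα0 hαt
    have hI1 : I1 ≤ ENNReal.ofReal (α.toReal⁻¹) := by
      rw [ENNReal.ofReal_inv_of_pos hα', ENNReal.ofReal_toReal hαt]
      rw [mul_comm] at h1
      exact ENNReal.le_inv_iff_mul_le.2 h1
    refine (mul_le_mul' (mul_le_mul' (ENNReal.rpow_le_rpow hI1 l0)
      (ENNReal.rpow_le_rpow hI2 (sub_nonneg.2 l1))) le_rfl).trans ?_
    rw [ENNReal.ofReal_rpow_of_pos (by positivity), ENNReal.ofReal_rpow_of_pos (by positivity),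
      ← ENNReal.ofReal_mul (by positivity), ← ENNReal.ofReal_mul (by positivity)]
    refine ENNReal.ofReal_le_ofReal ?_
    refine (mul_le_mul_of_nonneg_left key (by positivity)).trans (le_of_eq ?_)
    rw [Real.div_rpow hα'.le hb'.le, Real.inv_rpow hα'.le, Real.inv_rpow hb'.le,
      Real.rpow_sub hb', Real.rpow_one]
    have e1 : α.toReal ^ l ≠ 0 := (Real.rpow_pos_of_pos hα' l).ne'
    have e2 : b.toReal ^ l ≠ 0 := (Real.rpow_pos_of_pos hb' l).ne'
    field_simp

lemma tal_final {X : Type*} [MeasurableSpace X] (μ : Measure X) [IsProbabilityMeasure μ]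
    (α : X → ENNReal) (hα : Measurable α) (b P : ENNReal) (hb1 : b ≤ 1) (hb0 : b ≠ 0)
    (hle : ∀ᵐ a ∂μ, α a ≤ b) (hP : P = ∫⁻ a, α a ∂μ) :
    P * ∫⁻ a, ENNReal.ofReal ((2 - (α a).toReal / b.toReal) / b.toReal) ∂μ ≤ 1 := by
  have hbt : b ≠ ⊤ := ne_top_of_le_ne_top ENNReal.one_ne_top hb1
  have hb' : 0 < b.toReal := ENNReal.toReal_pos hb0 hbt
  have hPb : P ≤ b := by
    rw [hP]
    refine (lintegral_mono_ae hle).trans ?_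
    simp
  have hPt : P ≠ ⊤ := ne_top_of_le_ne_top hbt hPb
  have hint : Integrable (fun a => (α a).toReal) μ :=
    integrable_toReal_of_lintegral_ne_top hα.aemeasurable (hP ▸ hPt)
  have hval : ∫ a, (α a).toReal ∂μ = P.toReal := by
    rw [integral_toReal hα.aemeasurable, hP]
    filter_upwards [hle] with a ha using lt_of_le_of_lt ha hbt.lt_top
  have hnn : 0 ≤ᵐ[μ] fun a => (2 - (α a).toReal / b.toReal) / b.toReal := by
    filter_upwards [hle] with a ha
    have : (α a).toReal / b.toReal ≤ 1 :=
      div_le_one_of_le₀ (ENNReal.toReal_mono hbt ha) hb'.le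
    exact div_nonneg (by linarith) hb'.le
  have hint2 : Integrable (fun a => (2 - (α a).toReal / b.toReal)) μ :=
    (integrable_const _).sub (hint.div_const _)
  rw [← ofReal_integral_eq_lintegral_ofReal (hint2.div_const _) hnn, integral_div,
    integral_sub (integrable_const _) (hint.div_const _), integral_div, hval]
  rw [← ENNReal.ofReal_toReal hPt, ← ENNReal.ofReal_mul ENNReal.toReal_nonneg]
  rw [← ENNReal.ofReal_one]
  refine ENNReal.ofReal_le_ofReal ?_
  simp only [integral_const, probReal_univ, smul_eq_mul, one_mul,
    ENNReal.toReal_ofReal ENNReal.toReal_nonneg]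
  have : P.toReal * ((2 - P.toReal / b.toReal) / b.toReal)
      = 1 - (1 - P.toReal / b.toReal) ^ 2 := by
    field_simp
    ring
  rw [this]
  nlinarith [sq_nonneg (1 - P.toReal / b.toReal)]

lemma tal_cons_meas {X : Type*} [MeasurableSpace X] (n : ℕ) :
    Measurable (fun p : X × (Fin n → X) => (Fin.cons p.1 p.2 : Fin (n + 1) → X)) := by
  refine measurable_pi_iff.2 fun i => ?_
  refine Fin.cases ?_ (fun j => ?_) i
  · simpa using measurable_fst
  · simpa using! (measurable_pi_apply j).comp measurable_snd

lemma tal_tail_meas {X : Type*} [MeasurableSpace X] (n : ℕ) :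
    Measurable (fun x : Fin (n + 1) → X => Fin.tail x) :=
  measurable_pi_iff.2 fun _ => measurable_pi_apply _

lemma tal_lintegral {X : Type*} [MeasurableSpace X] (n : ℕ)
    (μ : Fin (n + 1) → Measure X) [∀ i, IsProbabilityMeasure (μ i)]
    (f : (Fin (n + 1) → X) → ENNReal) (hf : Measurable f) :
    ∫⁻ x, f x ∂(Measure.pi μ) =
      ∫⁻ a, ∫⁻ y, f (Fin.cons a y) ∂(Measure.pi fun i => μ (Fin.succ i)) ∂(μ 0) := by
  have h := (measurePreserving_piFinSuccAbove μ 0).symm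
  rw [← h.lintegral_comp hf, lintegral_prod (fun p => f ((MeasurableEquiv.piFinSuccAbove (fun _ => X) 0).symm p))
    (hf.comp h.measurable).aemeasurable]
  simp only [Fin.zero_succAbove]
  refine lintegral_congr fun a => lintegral_congr fun y => ?_
  congr 1
  exact Fin.insertNth_zero' a y

universe u in
theorem tal_main {X : Type u} [MeasurableSpace X] (n : ℕ) :
    ∀ (μ : Fin n → Measure X) [∀ i, IsProbabilityMeasure (μ i)]
      (Z : Type u) [MeasurableSpace Z] (A : Set (Z × (Fin n → X))), MeasurableSet A →
      ∃ g : Z × (Fin n → X) → ENNReal, Measurable g ∧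
        (∀ z x, ENNReal.ofReal (Real.exp (talD x {y | (z, y) ∈ A} ^ 2 / 4)) ≤ g (z, x)) ∧
        ∀ z, Measure.pi μ {y | (z, y) ∈ A} * ∫⁻ x, g (z, x) ∂(Measure.pi μ) ≤ 1 := by
  induction n with
  | zero =>
    intro μ _ Z _ A hA
    refine ⟨fun _ => 1, measurable_const, fun z x => ?_, fun z => ?_⟩
    · have : talD x {y | (z, y) ∈ A} = 0 := by
        refine le_antisymm ?_ (talD_nonneg _ _)
        refine csSup_le ⟨_, 0, by simp, by simp, rfl⟩ ?_
        rintro s ⟨w, -, -, rfl⟩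
        refine Real.sInf_nonpos ?_
        rintro t ⟨y, -, rfl⟩
        simp
      simp [this]
    · simpa using prob_le_one
  | succ n ih =>
    intro μ _ Z _ A hA
    set ν := Measure.pi fun i : Fin n => μ i.succ with hν
    have hφ : Measurable (fun p : (Z × X) × (Fin n → X) =>
        (p.1.1, (Fin.cons p.1.2 p.2 : Fin (n + 1) → X))) :=
      (measurable_fst.comp measurable_fst).prodMk
        ((tal_cons_meas n).comp ((measurable_snd.comp measurable_fst).prodMk measurable_snd))
    have hψ : Measurable (fun p : (Z × (Fin n → X)) × X =>
        (p.1.1, (Fin.cons p.2 p.1.2 : Fin (n + 1) → X))) :=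
      (measurable_fst.comp measurable_fst).prodMk
        ((tal_cons_meas n).comp (measurable_snd.prodMk (measurable_snd.comp measurable_fst)))
    let A' : Set ((Z × X) × (Fin n → X)) := {p | (p.1.1, Fin.cons p.1.2 p.2) ∈ A}
    have hA' : MeasurableSet A' := hφ hA
    let A'' : Set ((Z × (Fin n → X)) × X) := {p | (p.1.1, Fin.cons p.2 p.1.2) ∈ A}
    have hA'' : MeasurableSet A'' := hψ hA
    have hm : Measurable fun p : Z × (Fin n → X) => μ 0 {a | (p, a) ∈ A''} :=
      measurable_measure_prodMk_left hA''
    let B : Set (Z × (Fin n → X)) := {p | 0 < μ 0 {a | (p, a) ∈ A''}}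
    have hB : MeasurableSet B := measurableSet_lt measurable_const hm
    obtain ⟨g1, g1m, g1D, g1I⟩ := ih (fun i => μ i.succ) (Z × X) A' hA'
    obtain ⟨g2, g2m, g2D, g2I⟩ := ih (fun i => μ i.succ) Z B hB
    rw [← hν] at g1I g2I
    let α : Z × X → ENNReal := fun q => ν {y | (q, y) ∈ A'}
    let b : Z → ENNReal := fun z => ν {y | (z, y) ∈ B}
    let P : Z → ENNReal := fun z => Measure.pi μ {y | (z, y) ∈ A}
    have hα : Measurable α := measurable_measure_prodMk_left hA'
    have hb : Measurable b := measurable_measure_prodMk_left hB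
    have hPm : Measurable P := measurable_measure_prodMk_left hA
    let l : Z × X → ℝ := fun q => talLam ((α q).toReal / (b q.1).toReal)
    have hl : Measurable l :=
      talLam_meas.comp (hα.ennreal_toReal.div (hb.comp measurable_fst).ennreal_toReal)
    have hAz : ∀ z, MeasurableSet {y | (z, y) ∈ A} := fun z => measurable_prodMk_left hA
    have hBz : ∀ z, MeasurableSet {y | (z, y) ∈ B} := fun z => measurable_prodMk_left hB
    have hAz' : ∀ q, MeasurableSet {y | (q, y) ∈ A'} := fun q => measurable_prodMk_left hA'
    have hPα : ∀ z, P z = ∫⁻ a, α (z, a) ∂(μ 0) := by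
      intro z
      have : P z = ∫⁻ x, ({y | (z, y) ∈ A}.indicator 1 x) ∂(Measure.pi μ) :=
        (lintegral_indicator_one (hAz z)).symm
      rw [this, tal_lintegral n μ _ (measurable_one.indicator (hAz z))]
      refine lintegral_congr fun a => ?_
      exact lintegral_indicator_one (hAz' (z, a))
    have hαb : ∀ z, ∀ᵐ a ∂(μ 0), α (z, a) ≤ b z := by
      intro z
      let S : Set (X × (Fin n → X)) := {p | ((z, p.1), p.2) ∈ A' ∧ (z, p.2) ∉ B}
      have hS : MeasurableSet S := by
        refine MeasurableSet.inter ?_ (MeasurableSet.compl ?_)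
        · exact (((measurable_const.prodMk measurable_fst).prodMk measurable_snd) :
            Measurable fun p : X × (Fin n → X) => ((z, p.1), p.2)) hA'
        · exact ((measurable_const.prodMk measurable_snd) :
            Measurable fun p : X × (Fin n → X) => (z, p.2)) hB
      have h0 : ((μ 0).prod ν) S = 0 := by
        rw [Measure.prod_apply_symm hS]
        refine (lintegral_congr fun y => ?_).trans lintegral_zero
        by_cases hy : (z, y) ∈ B
        · have : (fun x => (x, y)) ⁻¹' S = ∅ := by
            ext a
            simp [S, hy]
          rw [this, measure_empty]
        · have hy' : μ 0 {a | ((z, y), a) ∈ A''} = 0 := by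
            by_contra hne
            exact hy (pos_iff_ne_zero.2 hne)
          refine measure_mono_null ?_ hy'
          rintro a ⟨ha, -⟩
          exact ha
      have h1 := Measure.ae_ae_of_ae_prod (measure_eq_zero_iff_ae_notMem.1 h0)
      filter_upwards [h1] with a ha
      refine measure_mono_ae ?_
      filter_upwards [ha] with y hy hy1
      by_contra hy2
      exact hy ⟨hy1, hy2⟩
    have hb1 : ∀ z, b z ≤ 1 := fun z => prob_le_one
    have hb0 : ∀ z, P z ≠ 0 → b z ≠ 0 := by
      intro z hz hbz
      apply hz
      rw [hPα z]
      refine le_antisymm ((lintegral_mono_ae (hαb z)).trans ?_) zero_le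
      simp [hbz]
    let G : (Z × X) × (Fin n → X) → ENNReal := fun p =>
      g1 p ^ l p.1 * g2 (p.1.1, p.2) ^ (1 - l p.1) *
        ENNReal.ofReal (Real.exp ((1 - l p.1) ^ 2 / 4))
    have hl' : Measurable fun p : (Z × X) × (Fin n → X) => l p.1 := hl.comp measurable_fst
    have hg2' : Measurable fun p : (Z × X) × (Fin n → X) => g2 (p.1.1, p.2) :=
      g2m.comp ((measurable_fst.comp measurable_fst).prodMk measurable_snd)
    have hG : Measurable G := by
      refine ((g1m.pow hl').mul (hg2'.pow (measurable_const.sub hl'))).mul ?_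
      exact (Real.measurable_exp.comp
        (((measurable_const.sub hl').pow_const 2).div_const 4)).ennreal_ofReal
    have hsplit : Measurable fun p : Z × (Fin (n + 1) → X) => ((p.1, p.2 0), Fin.tail p.2) :=
      (measurable_fst.prodMk ((measurable_pi_apply 0).comp measurable_snd)).prodMk
        ((tal_tail_meas n).comp measurable_snd)
    let g : Z × (Fin (n + 1) → X) → ENNReal := fun p =>
      if P p.1 = 0 then ⊤ else G ((p.1, p.2 0), Fin.tail p.2)
    have hg : Measurable g := by
      refine Measurable.ite ?_ measurable_const (hG.comp hsplit)
      exact (hPm.comp measurable_fst) (measurableSet_singleton 0)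
    refine ⟨g, hg, fun z x => ?_, fun z => ?_⟩
    · by_cases hz : P z = 0
      · simp [g, hz]
      · simp only [g, hz, if_false]
        have hstep := talD_step x {y | (z, y) ∈ A} {y | ((z, x 0), y) ∈ A'} {y | (z, y) ∈ B}
          (fun y hy => hy) (fun y hy => by
            obtain ⟨a, ha⟩ := nonempty_of_measure_ne_zero (pos_iff_ne_zero.1 hy)
            exact ⟨a, ha⟩) (nonempty_of_measure_ne_zero (hb0 z hz)) (l (z, x 0))
            (talLam_nonneg _) (talLam_le_one _) (by
              by_cases h : α (z, x 0) = 0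
              · left
                simp [l, h, talLam_zero]
              · exact Or.inr (nonempty_of_measure_ne_zero h))
        have k1 := ENNReal.rpow_le_rpow (g1D (z, x 0) (Fin.tail x))
          (talLam_nonneg _ : 0 ≤ l (z, x 0))
        have k2 := ENNReal.rpow_le_rpow (g2D z (Fin.tail x))
          (sub_nonneg.2 (talLam_le_one _) : 0 ≤ 1 - l (z, x 0))
        refine le_trans ?_ (mul_le_mul' (mul_le_mul' k1 k2) le_rfl)
        rw [ENNReal.ofReal_rpow_of_pos (Real.exp_pos _), ENNReal.ofReal_rpow_of_pos (Real.exp_pos _),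
          ← ENNReal.ofReal_mul (by positivity), ← ENNReal.ofReal_mul (by positivity),
          ← Real.exp_mul, ← Real.exp_mul, ← Real.exp_add, ← Real.exp_add]
        refine ENNReal.ofReal_le_ofReal (Real.exp_le_exp.2 ?_)
        linarith
    · change P z * _ ≤ 1
      by_cases hz : P z = 0
      · simp [hz]
      · refine le_trans (mul_le_mul' le_rfl ?_) (tal_final (μ 0) (fun a => α (z, a))
          (hα.comp measurable_prodMk_left) (b z) (P z) (hb1 z) (hb0 z hz) (hαb z) (hPα z))
        rw [tal_lintegral n μ (fun x => g (z, x)) (hg.comp measurable_prodMk_left)]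
        refine lintegral_mono_ae ?_
        filter_upwards [hαb z] with a ha
        refine le_trans ?_ (tal_num (∫⁻ y, g1 ((z, a), y) ∂ν) (∫⁻ y, g2 (z, y) ∂ν) (α (z, a)) (b z)
          ha (hb1 z) (hb0 z hz) (g1I (z, a)) (g2I z) (l (z, a)) rfl)
        refine le_trans ?_ (mul_le_mul' (ENNReal.lintegral_mul_norm_pow_le
          (g1m.comp measurable_prodMk_left).aemeasurable
          (g2m.comp measurable_prodMk_left).aemeasurable
          (talLam_nonneg _ : 0 ≤ l (z, a)) (sub_nonneg.2 (talLam_le_one _))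
          (add_sub_cancel _ _)) le_rfl)
        rw [← lintegral_mul_const']
        · refine lintegral_mono fun y => ?_
          simp only [g, hz, if_false, G, Fin.cons_zero, Fin.tail_cons, Function.comp]
          exact le_rfl
        · exact ENNReal.ofReal_ne_top

/-- Talagrand's convex hull concentration inequality: for `X` with independent coordinates
(law a product measure `ℚ = ⊗ μᵢ`) and measurable `A ⊆ 𝒳ⁿ`,
`ℙ{X ∈ A} · 𝔼 exp(D(X,A)²/4) ≤ 1`, and consequently
`ℙ{X ∈ A} · ℙ{D(X,A) ≥ t} ≤ exp(-t²/4)` for all `t ≥ 0`. -/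
theorem stmt18 {X : Type*} [MeasurableSpace X] (n : ℕ)
    (μ : Fin n → Measure X) [∀ i, IsProbabilityMeasure (μ i)]
    (A : Set (Fin n → X)) (hA : MeasurableSet A) :
    (Measure.pi μ A).toReal * ∫ x, Real.exp (talD x A ^ 2 / 4) ∂(Measure.pi μ) ≤ 1 ∧
    ∀ t : ℝ, 0 ≤ t →
      (Measure.pi μ A).toReal * (Measure.pi μ {x | t ≤ talD x A}).toReal ≤
        Real.exp (-t ^ 2 / 4) := by
  obtain ⟨g, gm, gD, gI⟩ := tal_main n μ PUnit {p : PUnit × (Fin n → X) | p.2 ∈ A}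
    (measurable_snd hA)
  have hf : Measurable fun x => g (PUnit.unit, x) := gm.comp measurable_prodMk_left
  have hD : ∀ x, ENNReal.ofReal (Real.exp (talD x A ^ 2 / 4)) ≤ g (PUnit.unit, x) :=
    gD PUnit.unit
  have hI : Measure.pi μ A * ∫⁻ x, g (PUnit.unit, x) ∂(Measure.pi μ) ≤ 1 := gI PUnit.unit
  constructor
  · have h1 : Measure.pi μ A *
        ∫⁻ x, ENNReal.ofReal (Real.exp (talD x A ^ 2 / 4)) ∂(Measure.pi μ) ≤ 1 :=
      (mul_le_mul' le_rfl (lintegral_mono hD)).trans hI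
    by_cases hint : Integrable (fun x => Real.exp (talD x A ^ 2 / 4)) (Measure.pi μ)
    · rw [integral_eq_lintegral_of_nonneg_ae (ae_of_all _ fun x => (Real.exp_pos _).le)
        hint.aestronglyMeasurable, ← ENNReal.toReal_mul]
      exact ENNReal.toReal_le_of_le_ofReal zero_le_one (by simpa using h1)
    · rw [integral_undef hint]
      simp
  · intro t ht
    have hM := mul_meas_ge_le_lintegral (μ := Measure.pi μ) hf
      (ENNReal.ofReal (Real.exp (t ^ 2 / 4)))
    have hsub : {x | t ≤ talD x A} ⊆
        {x | ENNReal.ofReal (Real.exp (t ^ 2 / 4)) ≤ g (PUnit.unit, x)} := by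
      intro x hx
      have hx' : t ≤ talD x A := hx
      refine le_trans (ENNReal.ofReal_le_ofReal (Real.exp_le_exp.2 ?_)) (hD x)
      have := pow_le_pow_left₀ ht hx' 2
      linarith
    have h2 : ENNReal.ofReal (Real.exp (t ^ 2 / 4)) *
        (Measure.pi μ A * Measure.pi μ {x | t ≤ talD x A}) ≤ 1 := by
      refine le_trans ?_ hI
      rw [mul_left_comm]
      exact mul_le_mul' le_rfl ((mul_le_mul' le_rfl (measure_mono hsub)).trans hM)
    have h3 := ENNReal.toReal_mono ENNReal.one_ne_top h2
    rw [ENNReal.toReal_mul, ENNReal.toReal_mul, ENNReal.toReal_ofReal (Real.exp_pos _).le,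
      ENNReal.toReal_one] at h3
    rw [neg_div, Real.exp_neg, ← one_div, le_div_iff₀' (Real.exp_pos _)]
    exact h3
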